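/- For any constants c, a ∈ ℝ, the vector field X on ℝ² given by X(y₁, y₂) = (c + y₁·y₂, a + (y₁² + y₂²)/2) is conformal with respect to the flat hyperbolic bilinear form B((v₁,v₂),(w₁,w₂)) := v₁w₁ − v₂w₂, with potential function f(y₁,y₂) = 2y₂: for all p = (y₁,y₂) ∈ ℝ² and all v, w ∈ ℝ², one has B((DX)_p v, w) + B(v, (DX)_p w) = 2y₂ · B(v, w), where (DX)_p is the Fréchet derivative of X at p. -/

import Mathlib

/-!
The Jacobian of `X` at `(y₁, y₂)` is `J = [[y₂, y₁], [y₁, y₂]]`, that is, `y₂` times the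
identity plus `y₁` times the coordinate swap (`fderiv_G27field_apply`). The swap is skew for
the hyperbolic form `B`, so only the scalar part `y₂` survives in `B(Jv, w) + B(v, Jw)`,
which is therefore `2y₂·B(v, w)`.
-/

/-- The flat hyperbolic bilinear form `B((v₁,v₂),(w₁,w₂)) = v₁w₁ - v₂w₂` on `ℝ²`. -/
def hypB (v w : ℝ × ℝ) : ℝ := v.1 * w.1 - v.2 * w.2

/-- The time-slice vector field of the first-order system equivalent to the Gambier
equation G27: `X(y₁,y₂) = (c + y₁y₂, a + (y₁² + y₂²)/2)`. -/
noncomputable def G27field (c a : ℝ) : ℝ × ℝ → ℝ × ℝ :=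
  fun p => (c + p.1 * p.2, a + (p.1 ^ 2 + p.2 ^ 2) / 2)

/-- The Jacobian of `X` is `[[y₂, y₁], [y₁, y₂]]`. -/
theorem fderiv_G27field_apply (c a : ℝ) (p v : ℝ × ℝ) :
    fderiv ℝ (G27field c a) p v
      = (p.2 * v.1 + p.1 * v.2, p.1 * v.1 + p.2 * v.2) := by
  have h1 : HasFDerivAt (fun q : ℝ × ℝ => q.1) (ContinuousLinearMap.fst ℝ ℝ ℝ) p :=
    hasFDerivAt_fst
  have h2 : HasFDerivAt (fun q : ℝ × ℝ => q.2) (ContinuousLinearMap.snd ℝ ℝ ℝ) p :=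
    hasFDerivAt_snd
  -- Division by 2 in the second component is definitionally multiplication by `2⁻¹`.
  have hX : HasFDerivAt (G27field c a) _ p :=
    ((h1.mul h2).const_add c).prodMk
      ((((h1.pow 2).add (h2.pow 2)).mul_const (2⁻¹ : ℝ)).const_add a)
  rw [hX.fderiv]
  ext
  · simp
    ring
  · simp
    ring

/-- For any `c, a ∈ ℝ`, the vector field `X(y₁,y₂) = (c + y₁y₂, a + (y₁² + y₂²)/2)` is
conformal with respect to the flat hyperbolic form `B(v,w) = v₁w₁ - v₂w₂`, with potential
function `f(y₁,y₂) = 2y₂`: `B((DX)_p v, w) + B(v, (DX)_p w) = 2y₂·B(v,w)` for all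
`p = (y₁,y₂)` and all `v, w`. -/
theorem G27field_conformal_hyperbolic (c a : ℝ) :
    ∀ (p v w : ℝ × ℝ),
      hypB (fderiv ℝ (G27field c a) p v) w + hypB v (fderiv ℝ (G27field c a) p w)
        = 2 * p.2 * hypB v w := by
  intro p v w
  rw [fderiv_G27field_apply, fderiv_G27field_apply]
  simp only [hypB]
  ring
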